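/- Fix t > 0, x₀ ∈ ℝ, μ ∈ ℝ, σ > 0 with x₀ ≠ μ. For each θ > 0 let γ_θ be the Gaussian probability measure on ℝ with mean m_t = x₀·e^{−θt} + μ·(1 − e^{−θt}) and variance σ_t² = (σ²/(2θ))·(1 − e^{−2θt}). Define T**_n : ℝⁿ → ℝ by T**_n(z_1,…,z_n) = −(1/t)·ln( ((Σ_{k=1}^n z_k)/n − μ) / (x₀ − μ) ), and define T_{**}^{(1)} : ℝ^ℕ → ℝ by T_{**}^{(1)}((z_k)_{k∈ℕ}) = limsup_{n→∞} T**_n(z_1,…,z_n). Then for every θ > 0, γ_θ^ℕ({(z_k)_{k∈ℕ} ∈ ℝ^ℕ : T_{**}^{(1)}((z_k)) = θ}) = 1; that is, T_{**}^{(1)} is an infinite-sample consistent estimator of θ for the family (γ_θ^ℕ)_{θ>0}. -/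

import Mathlib

/-! The coordinates under `ν^ℕ` are i.i.d. with law `ν`, so by the strong law of large numbers the
sample means converge almost surely to the mean of `ν`. For the Gaussian law at hand the mean is
`m_t = μ + (x₀ - μ) exp (-θ t)`, so the argument of the logarithm tends to `exp (-θ t) > 0`.
Continuity of `log` there makes the estimators converge to `θ`, and the limsup of a convergent real
sequence is its limit. -/

open MeasureTheory ProbabilityTheory Filter Real

/-- `P` is the countable product measure `ν^ℕ` on `ℕ → ℝ` of the Borel probability
measure `ν` on `ℝ`: it is a probability measure whose finite-dimensional cylinder
marginals are products of `ν`. -/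
def IsCountableProductOf (P : Measure (ℕ → ℝ)) (ν : Measure ℝ) : Prop :=
  IsProbabilityMeasure P ∧
    ∀ (s : Finset ℕ) (B : ℕ → Set ℝ), (∀ i ∈ s, MeasurableSet (B i)) →
      P {z : ℕ → ℝ | ∀ i ∈ s, z i ∈ B i} = ∏ i ∈ s, ν (B i)

theorem IsCountableProductOf.eq_infinitePi {P : Measure (ℕ → ℝ)} {ν : Measure ℝ}
    [IsProbabilityMeasure ν] (h : IsCountableProductOf P ν) :
    P = Measure.infinitePi (fun _ : ℕ => ν) :=
  Measure.eq_infinitePi _ fun s B hB => h.2 s B (fun i _ => hB i)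

/-- The strong law of large numbers for the coordinates under `ν^ℕ`. -/
theorem IsCountableProductOf.ae_tendsto_average {P : Measure (ℕ → ℝ)} {ν : Measure ℝ}
    [IsProbabilityMeasure ν] (h : IsCountableProductOf P ν) (hint : Integrable id ν) :
    ∀ᵐ z ∂P, Tendsto (fun n : ℕ => (∑ k ∈ Finset.range n, z k) / (n : ℝ)) atTop
      (nhds (∫ x, x ∂ν)) := by
  obtain rfl := h.eq_infinitePi
  have hmp (i : ℕ) := measurePreserving_eval_infinitePi (fun _ : ℕ => ν) i
  have hindep : iIndepFun (fun (i : ℕ) (z : ℕ → ℝ) => z i) (Measure.infinitePi fun _ : ℕ => ν) :=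
    iIndepFun_infinitePi (X := fun _ x => x) (fun _ => measurable_id)
  have hslln := strong_law_ae_real (fun (i : ℕ) (z : ℕ → ℝ) => z i)
    ((hmp 0).integrable_comp_of_integrable hint) (fun i j hij => hindep.indepFun hij)
    (fun i => ⟨(measurable_pi_apply i).aemeasurable, (measurable_pi_apply 0).aemeasurable,
      (hmp i).map_eq.trans (hmp 0).map_eq.symm⟩)
  have hmean : ∫ z : ℕ → ℝ, z 0 ∂(Measure.infinitePi fun _ : ℕ => ν) = ∫ x, x ∂ν := by
    have h0 := integral_map (μ := Measure.infinitePi fun _ : ℕ => ν)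
      (hmp 0).measurable.aemeasurable (f := id) measurable_id.aestronglyMeasurable
    rw [(hmp 0).map_eq] at h0
    exact h0.symm
  rwa [hmean] at hslln

theorem ou_theta_limsup_infinite_sample_consistent
    (t x₀ μ σ : ℝ) (ht : 0 < t) (hσ : 0 < σ) (hx₀μ : x₀ ≠ μ)
    (P : ℝ → Measure (ℕ → ℝ))
    (hP : ∀ θ : ℝ, 0 < θ → IsCountableProductOf (P θ)
      (gaussianReal (x₀ * Real.exp (-θ * t) + μ * (1 - Real.exp (-θ * t)))
        ((σ ^ 2 / (2 * θ) * (1 - Real.exp (-2 * θ * t))).toNNReal))) :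
    ∀ θ : ℝ, 0 < θ →
      P θ {z : ℕ → ℝ |
        Filter.limsup (fun n : ℕ =>
            -(1 / t) * Real.log (((∑ k ∈ Finset.range n, z k) / n - μ) / (x₀ - μ)))
          atTop = θ} = 1 := by
  intro θ hθ
  set m := x₀ * Real.exp (-θ * t) + μ * (1 - Real.exp (-θ * t)) with hm
  have hd : x₀ - μ ≠ 0 := sub_ne_zero.mpr hx₀μ
  have hprob : IsProbabilityMeasure (P θ) := (hP θ hθ).1
  have hlaw := (hP θ hθ).ae_tendsto_average IsGaussian.integrable_id
  simp only [integral_id_gaussianReal] at hlaw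
  -- The limit of the logarithm's argument is `exp (-θ t) ≠ 0`, a continuity point of `log`.
  have hlim : (m - μ) / (x₀ - μ) = Real.exp (-θ * t) := by
    rw [hm]
    field_simp
    ring
  have hval : -(1 / t) * Real.log ((m - μ) / (x₀ - μ)) = θ := by
    rw [hlim, Real.log_exp]
    field_simp
  have key : ∀ᵐ z ∂(P θ), Filter.limsup (fun n : ℕ =>
      -(1 / t) * Real.log (((∑ k ∈ Finset.range n, z k) / n - μ) / (x₀ - μ))) atTop = θ := by
    filter_upwards [hlaw] with z hz
    refine Tendsto.limsup_eq ?_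
    have hne : (m - μ) / (x₀ - μ) ≠ 0 := hlim ▸ (Real.exp_pos _).ne'
    have h := (((hz.sub_const μ).div_const (x₀ - μ)).log hne).const_mul (-(1 / t))
    rwa [hval] at h
  -- An almost sure event has measure one, whether or not it is measurable.
  rw [measure_congr (eventuallyEq_univ.mpr key), measure_univ]
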